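/- Let G=(V,E) be a Bonnet-Myers sharp graph of diameter 2 and let x,y∈V with x∼y and d_x<d_y. Then d_y=d_x+1, there is exactly one vertex z∈V with d(x,z)=2, this vertex satisfies d_z=d_x, and |V|=d_x+2 (so y is adjacent to every other vertex of G). -/

import Mathlib

open scoped Classical
open Finset

noncomputable section

/-- The degree of a vertex `x` in the graph `G`. -/
def deg {V : Type*} [Fintype V] (G : SimpleGraph V) (x : V) : ℕ :=
  (Finset.univ.filter (fun y => G.Adj x y)).card

/-- The diameter of `G`: the maximum of the combinatorial distance over all pairs of vertices. -/
def diam {V : Type*} [Fintype V] (G : SimpleGraph V) : ℕ :=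
  Finset.univ.sup (fun xy : V × V => G.dist xy.1 xy.2)

/-- The probability measure `μ_x^p` of the lazy simple random walk at `x` with idleness `p`. -/
def mu {V : Type*} [Fintype V] (G : SimpleGraph V) (p : ℝ) (x : V) : V → ℝ :=
  fun z => if z = x then p else if G.Adj x z then (1 - p) / (deg G x : ℝ) else 0

/-- The Wasserstein distance `W₁(μ₁, μ₂)` with respect to the combinatorial distance of `G`:
the infimum of the total transport cost over all transport plans from `μ₁` to `μ₂`. -/
def W1 {V : Type*} [Fintype V] (G : SimpleGraph V) (μ₁ μ₂ : V → ℝ) : ℝ :=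
  sInf {c : ℝ | ∃ π : V → V → ℝ,
    (∀ x y, 0 ≤ π x y ∧ π x y ≤ 1) ∧
    (∀ x, ∑ y, π x y = μ₁ x) ∧
    (∀ y, ∑ x, π x y = μ₂ y) ∧
    c = ∑ x, ∑ y, (G.dist x y : ℝ) * π x y}

/-- The `p`-Ollivier-Ricci curvature `κ_p(x,y) = 1 - W₁(μ_x^p, μ_y^p)`. -/
def kappa {V : Type*} [Fintype V] (G : SimpleGraph V) (p : ℝ) (x y : V) : ℝ :=
  1 - W1 G (mu G p x) (mu G p y)

/-- The Lin-Lu-Yau curvature `κ_LLY(x,y) = lim_{p→1} κ_p(x,y)/(1-p)`. -/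
def kappaLLY {V : Type*} [Fintype V] (G : SimpleGraph V) (x y : V) : ℝ :=
  Filter.limUnder (nhdsWithin 1 (Set.Iio 1)) (fun p => kappa G p x y / (1 - p))

/-- `G` is Bonnet-Myers sharp if the infimum of `κ_LLY` over the edges equals `2/diam(G)`. -/
def BMSharp {V : Type*} [Fintype V] (G : SimpleGraph V) : Prop :=
  sInf {r : ℝ | ∃ x y, G.Adj x y ∧ r = kappaLLY G x y} = 2 / (diam G : ℝ)

/-- `G` is obtained from the complete graph on its vertex set by deleting a matching
(a set of pairwise disjoint edges, encoded as a symmetric irreflexive relation in which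
every vertex has at most one partner). -/
def IsMatchingDeletionOfComplete {V : Type*} (G : SimpleGraph V) : Prop :=
  ∃ M : V → V → Prop, Symmetric M ∧ (∀ x, ¬ M x x) ∧
    (∀ x y z, M x y → M x z → y = z) ∧
    (∀ x y, G.Adj x y ↔ x ≠ y ∧ ¬ M x y)

/-- The graph `G(a,b)` on `2a+b` vertices `u_1, …, u_{2a}, v_1, …, v_b` (encoded as
`Fin (2a+b)`, with `u_i` the index `i-1` and `v_j` the index `2a+j-1`), in which two distinct
vertices are adjacent unless they form a pair `{u_{2i-1}, u_{2i}}`, i.e. `G(a,b)` is the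
complete graph `K_{2a+b}` with a matching of size `a` deleted. -/
def Gab (a b : ℕ) : SimpleGraph (Fin (2*a+b)) where
  Adj x y := x ≠ y ∧ ¬((x : ℕ) < 2*a ∧ (y : ℕ) < 2*a ∧ (x : ℕ)/2 = (y : ℕ)/2)
  symm := by
    constructor
    intro x y h
    exact ⟨h.1.symm, fun hc => h.2 ⟨hc.2.1, hc.1, hc.2.2.symm⟩⟩
  loopless := by constructor; intro x h; exact h.1 rfl

/-- The antitree `AT(a_1, …, a_N)` on the disjoint union of sets `V_1, …, V_N` with
`|V_k| = a_k` (0-indexed here: `V_k` is `Fin (a k)` for `k : Fin N`): two distinct vertices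
are adjacent iff they lie in the same set or in consecutive sets. -/
def antitree (N : ℕ) (a : Fin N → ℕ) : SimpleGraph (Σ k : Fin N, Fin (a k)) where
  Adj x y := x ≠ y ∧
    ((x.1 : ℕ) = (y.1 : ℕ) ∨ (x.1 : ℕ) + 1 = (y.1 : ℕ) ∨ (y.1 : ℕ) + 1 = (x.1 : ℕ))
  symm := by
    constructor
    intro x y h
    refine ⟨h.1.symm, ?_⟩
    rcases h.2 with h2 | h2 | h2
    · exact Or.inl h2.symm
    · exact Or.inr (Or.inr h2)
    · exact Or.inr (Or.inl h2)
  loopless := by constructor; intro x h; exact h.1 rfl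

def avg {V : Type*} [Fintype V] (G : SimpleGraph V) (f : V → ℝ) (a : V) : ℝ :=
  (∑ v ∈ Finset.univ.filter (fun v => G.Adj a v), f v) / (deg G a : ℝ)

theorem sum_mu {V : Type*} [Fintype V] (G : SimpleGraph V) (f : V → ℝ) (p : ℝ) (a : V) :
    ∑ v, f v * mu G p a v = p * f a + (1 - p) * avg G f a := by
  have h : ∀ v, f v * mu G p a v = (if v = a then p * f v else 0) +
      (if G.Adj a v then (1 - p) / (deg G a : ℝ) * f v else 0) := by
    intro v
    unfold mu
    by_cases h1 : v = a
    · subst h1; simp [mul_comm]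
    · by_cases h2 : G.Adj a v <;> simp [h1, h2, mul_comm]
  rw [Finset.sum_congr rfl (fun v _ => h v), Finset.sum_add_distrib]
  congr 1
  · simp
  · rw [← Finset.sum_filter, ← Finset.mul_sum, avg]
    ring

theorem deg_pos' {V : Type*} [Fintype V] {G : SimpleGraph V} {a b : V} (h : G.Adj a b) :
    0 < deg G a := Finset.card_pos.mpr ⟨b, by simp [h]⟩

theorem sum_mu_one {V : Type*} [Fintype V] {G : SimpleGraph V} {a b : V} (h : G.Adj a b) (p : ℝ) :
    ∑ v, mu G p a v = 1 := by
  have := sum_mu G (fun _ => 1) p a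
  have hd : (deg G a : ℝ) ≠ 0 := by exact_mod_cast (deg_pos' h).ne'
  have h2 : avg G (fun _ => 1) a = 1 := by
    unfold avg; rw [Finset.sum_const, nsmul_eq_mul, mul_one]; exact div_self hd
  rw [h2] at this
  simp only [one_mul] at this
  rw [this]; ring

theorem mu_nonneg {V : Type*} [Fintype V] (G : SimpleGraph V) (a : V) {p : ℝ}
    (h0 : 0 ≤ p) (h1 : p ≤ 1) (v : V) : 0 ≤ mu G p a v := by
  unfold mu
  have : 0 ≤ 1 - p := by linarith
  split_ifs <;> positivity

theorem mu_le_one {V : Type*} [Fintype V] {G : SimpleGraph V} {a b : V} (h : G.Adj a b) {p : ℝ}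
    (h0 : 0 ≤ p) (h1 : p ≤ 1) (v : V) : mu G p a v ≤ 1 := by
  rw [← sum_mu_one h p]
  exact Finset.single_le_sum (f := mu G p a) (fun i _ => mu_nonneg G a h0 h1 i) (Finset.mem_univ v)

def costs {V : Type*} [Fintype V] (G : SimpleGraph V) (μ₁ μ₂ : V → ℝ) : Set ℝ :=
  {c : ℝ | ∃ π : V → V → ℝ,
    (∀ x y, 0 ≤ π x y ∧ π x y ≤ 1) ∧
    (∀ x, ∑ y, π x y = μ₁ x) ∧
    (∀ y, ∑ x, π x y = μ₂ y) ∧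
    c = ∑ x, ∑ y, (G.dist x y : ℝ) * π x y}

theorem costs_nonempty {V : Type*} [Fintype V] {G : SimpleGraph V} {a b : V} (h : G.Adj a b) {p : ℝ}
    (h0 : 0 ≤ p) (h1 : p ≤ 1) : (costs G (mu G p a) (mu G p b)).Nonempty := by
  refine ⟨_, fun x y => mu G p a x * mu G p b y, ?_, ?_, ?_, rfl⟩
  · intro x y
    exact ⟨mul_nonneg (mu_nonneg G a h0 h1 x) (mu_nonneg G b h0 h1 y),
      mul_le_one₀ (mu_le_one h h0 h1 x) (mu_nonneg G b h0 h1 y) (mu_le_one h.symm h0 h1 y)⟩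
  · intro x
    rw [← Finset.mul_sum, sum_mu_one h.symm, mul_one]
  · intro x
    rw [← Finset.sum_mul, sum_mu_one h, one_mul]

theorem costs_nonneg {V : Type*} [Fintype V] {G : SimpleGraph V} {m n : V → ℝ} {c : ℝ}
    (h : c ∈ costs G m n) : 0 ≤ c := by
  obtain ⟨π, h1, -, -, rfl⟩ := h
  exact Finset.sum_nonneg fun x _ => Finset.sum_nonneg fun y _ =>
    mul_nonneg (Nat.cast_nonneg _) (h1 x y).1

theorem costs_lip {V : Type*} [Fintype V] {G : SimpleGraph V} {m n : V → ℝ} {c : ℝ}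
    (h : c ∈ costs G m n) (f : V → ℝ) (hf : ∀ u v, f v - f u ≤ G.dist u v) :
    ∑ v, f v * n v - ∑ v, f v * m v ≤ c := by
  obtain ⟨π, h1, h2, h3, rfl⟩ := h
  have e1 : ∑ v, f v * n v = ∑ x, ∑ y, f y * π x y := by
    rw [Finset.sum_comm]
    refine Finset.sum_congr rfl fun y _ => ?_
    rw [← Finset.mul_sum, h3]
  have e2 : ∑ v, f v * m v = ∑ x, ∑ y, f x * π x y := by
    refine Finset.sum_congr rfl fun y _ => ?_
    rw [← Finset.mul_sum, h2]
  rw [e1, e2, ← Finset.sum_sub_distrib]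
  refine Finset.sum_le_sum fun x _ => ?_
  rw [← Finset.sum_sub_distrib]
  refine Finset.sum_le_sum fun y _ => ?_
  rw [← sub_mul]
  exact mul_le_mul_of_nonneg_right (hf x y) (h1 x y).1

theorem mu_mix {V : Type*} [Fintype V] (G : SimpleGraph V) (a : V) (p t : ℝ) (v : V) :
    mu G ((1 - t) * p + t) a v = (1 - t) * mu G p a v + (if v = a then t else 0) := by
  unfold mu
  split_ifs <;> ring

theorem costs_mix {V : Type*} [Fintype V] {G : SimpleGraph V} {a b : V} (h : G.Adj a b) {p t c : ℝ}
    (ht0 : 0 ≤ t) (ht1 : t ≤ 1)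
    (hc : c ∈ costs G (mu G p a) (mu G p b)) :
    (1 - t) * c + t ∈ costs G (mu G ((1 - t) * p + t) a) (mu G ((1 - t) * p + t) b) := by
  obtain ⟨π, h1, h2, h3, rfl⟩ := hc
  refine ⟨fun x y => (1 - t) * π x y + (if x = a then if y = b then t else 0 else 0), ?_, ?_, ?_, ?_⟩
  · intro x y
    have := h1 x y
    have h5 : 0 ≤ (if x = a then if y = b then t else 0 else 0) ∧
      (if x = a then if y = b then t else 0 else 0) ≤ t := by
      split_ifs <;> constructor <;> linarith
    constructor
    · have := mul_nonneg (sub_nonneg.2 ht1) this.1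
      linarith [h5.1]
    · have := mul_le_mul_of_nonneg_left this.2 (sub_nonneg.2 ht1)
      linarith [h5.2]
  · intro x
    rw [mu_mix, Finset.sum_add_distrib, ← Finset.mul_sum, h2]
    split_ifs <;> simp
  · intro y
    rw [mu_mix, Finset.sum_add_distrib, ← Finset.mul_sum, h3]
    simp
  · have hd : (G.dist a b : ℝ) = 1 := by
      rw [SimpleGraph.dist_eq_one_iff_adj.2 h]; simp
    simp only [mul_add, Finset.sum_add_distrib, mul_ite, mul_zero]
    congr 1
    · rw [Finset.mul_sum]
      refine Finset.sum_congr rfl fun x _ => ?_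
      rw [Finset.mul_sum]
      refine Finset.sum_congr rfl fun y _ => ?_
      ring
    · have : ∀ x : V, (∑ y, if x = a then if y = b then (G.dist x y : ℝ) * t else 0 else 0)
          = if x = a then (G.dist x b : ℝ) * t else 0 := by
        intro x
        split_ifs <;> simp
      rw [Finset.sum_congr rfl (fun x _ => this x)]
      simp [hd]

theorem W1_mix {V : Type*} [Fintype V] {G : SimpleGraph V} {a b : V} (h : G.Adj a b) {p t : ℝ}
    (h0 : 0 ≤ p) (h1 : p ≤ 1) (ht0 : 0 ≤ t) (ht1 : t < 1) :
    W1 G (mu G ((1 - t) * p + t) a) (mu G ((1 - t) * p + t) b) ≤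
      (1 - t) * W1 G (mu G p a) (mu G p b) + t := by
  have ht : 0 < 1 - t := by linarith
  have : (W1 G (mu G ((1 - t) * p + t) a) (mu G ((1 - t) * p + t) b) - t) / (1 - t) ≤
      W1 G (mu G p a) (mu G p b) := by
    refine le_csInf (costs_nonempty h h0 h1) fun c hc => ?_
    rw [div_le_iff₀ ht]
    have : W1 G (mu G ((1 - t) * p + t) a) (mu G ((1 - t) * p + t) b) ≤ (1 - t) * c + t :=
      csInf_le ⟨0, fun c hc => costs_nonneg hc⟩ (costs_mix h ht0 ht1.le hc)
    linarith
  rw [div_le_iff₀ ht] at this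
  linarith

theorem kappa_mono {V : Type*} [Fintype V] {G : SimpleGraph V} {a b : V} (h : G.Adj a b) :
    MonotoneOn (fun p => kappa G p a b / (1 - p)) (Set.Ioo 0 1) := by
  intro p hp q hq hpq
  have hp1 : 0 < 1 - p := by linarith [hp.2]
  have hq1 : 0 < 1 - q := by linarith [hq.2]
  have hm := W1_mix (G := G) h (p := p) (t := (q - p) / (1 - p)) hp.1.le hp.2.le
    (div_nonneg (by linarith) hp1.le) (by rw [div_lt_one hp1]; linarith [hq.2])
  have e : 1 - (q - p) / (1 - p) = (1 - q) / (1 - p) := by field_simp; ring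
  have e2 : (1 - (q - p) / (1 - p)) * p + (q - p) / (1 - p) = q := by field_simp; ring
  rw [e2, e] at hm
  show kappa G p a b / (1 - p) ≤ kappa G q a b / (1 - q)
  rw [le_div_iff₀ hq1]
  unfold kappa
  have e3 : (1 - W1 G (mu G p a) (mu G p b)) / (1 - p) * (1 - q) =
    1 - ((1 - q) / (1 - p) * W1 G (mu G p a) (mu G p b) + (q - p) / (1 - p)) := by
    field_simp; ring
  rw [e3]; linarith

theorem kappaLLY_le {V : Type*} [Fintype V] {G : SimpleGraph V} {a b : V} (h : G.Adj a b)
    (f : V → ℝ) (hf : ∀ u v, f v - f u ≤ G.dist u v) (hab : f b = f a + 1) :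
    kappaLLY G a b ≤ avg G f a - avg G f b + 1 := by
  have hb : ∀ p ∈ Set.Ioo (0:ℝ) 1, kappa G p a b / (1 - p) ≤ avg G f a - avg G f b + 1 := by
    intro p hp
    have hp1 : 0 < 1 - p := by linarith [hp.2]
    rw [div_le_iff₀ hp1]
    have : p * f b + (1 - p) * avg G f b - (p * f a + (1 - p) * avg G f a) ≤
        W1 G (mu G p a) (mu G p b) := by
      refine le_csInf (costs_nonempty h hp.1.le hp.2.le) fun c hc => ?_
      rw [← sum_mu, ← sum_mu]
      exact costs_lip hc f hf
    unfold kappa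
    rw [hab] at this
    linarith
  have hne : (Set.Ioo (0:ℝ) 1).Nonempty := ⟨1/2, by norm_num, by norm_num⟩
  have ht := (kappa_mono h).tendsto_nhdsWithin_Ioo_left hne
    ⟨avg G f a - avg G f b + 1, by rintro _ ⟨p, hp, rfl⟩; exact hb p hp⟩
  unfold kappaLLY
  rw [ht.limUnder_eq]
  refine csSup_le (hne.image _) ?_
  rintro _ ⟨p, hp, rfl⟩; exact hb p hp

theorem key {V : Type*} [Fintype V] {G : SimpleGraph V} (hconn : G.Connected)
    (hdiam : diam G = 2) (hBM : BMSharp G) {a b : V} (h : G.Adj a b) (c : V)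
    (hab : G.dist c b = G.dist c a + 1) :
    avg G (fun v => (G.dist c v : ℝ)) b ≤ avg G (fun v => (G.dist c v : ℝ)) a := by
  have h1 : 1 ≤ kappaLLY G a b := by
    unfold BMSharp at hBM
    rw [hdiam] at hBM
    have : (1:ℝ) = 2 / ((2:ℕ):ℝ) := by norm_num
    rw [this, ← hBM]
    refine csInf_le (Set.Finite.bddBelow ?_) ⟨a, b, h, rfl⟩
    refine (Set.finite_range (fun q : V × V => kappaLLY G q.1 q.2)).subset ?_
    rintro _ ⟨x, y, -, rfl⟩
    exact ⟨(x, y), rfl⟩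
  have h2 := kappaLLY_le h (fun v => (G.dist c v : ℝ)) (fun u v => by
    have : G.dist c v ≤ G.dist c u + G.dist u v := hconn.dist_triangle
    have : (G.dist c v : ℝ) ≤ G.dist c u + G.dist u v := by exact_mod_cast this
    linarith) (by simp only [hab]; push_cast; ring)
  linarith

theorem dist_le_two {V : Type*} [Fintype V] {G : SimpleGraph V}
    (hdiam : diam G = 2) (u v : V) : G.dist u v ≤ 2 := by
  rw [← hdiam]
  exact Finset.le_sup (f := fun xy : V × V => G.dist xy.1 xy.2) (Finset.mem_univ (u, v))

theorem dist_two {V : Type*} [Fintype V] {G : SimpleGraph V} (hconn : G.Connected)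
    (hdiam : diam G = 2) {u v : V} (h : v ≠ u) (h' : ¬ G.Adj u v) : G.dist u v = 2 := by
  have h1 := dist_le_two hdiam u v
  have h2 : G.dist u v ≠ 0 := fun h0 => h (hconn.dist_eq_zero_iff.1 h0).symm
  have h3 : G.dist u v ≠ 1 := fun h0 => h' (SimpleGraph.dist_eq_one_iff_adj.1 h0)
  omega

theorem out_card {V : Type*} [Fintype V] {G : SimpleGraph V} (hconn : G.Connected)
    (hdiam : diam G = 2) (hBM : BMSharp G) {x y : V} (h : G.Adj x y) :
    (Finset.univ.filter (fun v => G.Adj y v ∧ v ≠ x ∧ ¬ G.Adj x v)).card ≤ 1 := by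
  have hk := key hconn hdiam hBM h x (by
    rw [SimpleGraph.dist_eq_one_iff_adj.2 h, SimpleGraph.dist_self])
  have hdx : (0:ℝ) < deg G x := by exact_mod_cast deg_pos' h
  have hdy : (0:ℝ) < deg G y := by exact_mod_cast deg_pos' h.symm
  have hx : avg G (fun v => (G.dist x v : ℝ)) x = 1 := by
    unfold avg
    rw [Finset.sum_congr rfl (g := fun _ => (1:ℝ))]
    · rw [Finset.sum_const, nsmul_eq_mul, mul_one]; exact div_self hdx.ne'
    · intro v hv
      have hv : G.Adj x v := by simpa using hv
      show (G.dist x v : ℝ) = 1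
      rw [SimpleGraph.dist_eq_one_iff_adj.2 hv]; simp
  rw [hx] at hk
  unfold avg at hk
  rw [div_le_one hdy] at hk
  have hs : ∀ v ∈ Finset.univ.filter (fun v => G.Adj y v), (G.dist x v : ℝ) =
      1 + (if v ≠ x ∧ ¬ G.Adj x v then (1:ℝ) else 0) - (if v = x then (1:ℝ) else 0) := by
    intro v _
    by_cases h1 : v = x
    · subst h1; simp
    · by_cases h2 : G.Adj x v
      · rw [SimpleGraph.dist_eq_one_iff_adj.2 h2]; simp [h1, h2]
      · rw [dist_two hconn hdiam h1 h2]; simp [h1, h2]; norm_num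
  rw [Finset.sum_congr rfl hs, Finset.sum_sub_distrib, Finset.sum_add_distrib, Finset.sum_const,
    nsmul_eq_mul, mul_one, ← Finset.sum_filter, Finset.filter_filter, Finset.sum_const,
    nsmul_eq_mul, mul_one, Finset.sum_ite_eq' _ x (fun _ => (1:ℝ)), if_pos (by simp [h.symm])] at hk
  have : ((Finset.univ.filter (fun v => G.Adj y v ∧ v ≠ x ∧ ¬ G.Adj x v)).card : ℝ) ≤ 1 := by
    have e : ((Finset.univ.filter (fun v => G.Adj y v)).card : ℝ) = deg G y := rfl
    rw [e] at hk
    linarith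
  exact_mod_cast this

/-- In a Bonnet-Myers sharp graph of diameter 2, if `x ∼ y` and `d_x < d_y`, then
`d_y = d_x + 1`, `x` has exactly one vertex at distance 2, that vertex has degree `d_x`, the
graph has `d_x + 2` vertices, and `y` is adjacent to every other vertex. -/
theorem stmt9 {V : Type*} [Fintype V] (G : SimpleGraph V) (hconn : G.Connected)
    (hdiam : diam G = 2) (hBM : BMSharp G) (x y : V) (hxy : G.Adj x y)
    (hdeg : deg G x < deg G y) :
    deg G y = deg G x + 1 ∧
    (∃! z : V, G.dist x z = 2) ∧
    (∀ z : V, G.dist x z = 2 → deg G z = deg G x) ∧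
    Fintype.card V = deg G x + 2 ∧
    (∀ w : V, w ≠ y → G.Adj y w) := by
  set D := Finset.univ.filter (fun v => G.Adj y v ∧ v ≠ x ∧ ¬ G.Adj x v) with hD
  have hDc : D.card ≤ 1 := out_card hconn hdiam hBM hxy
  set Nx := Finset.univ.filter (fun v => G.Adj x v) with hNx
  set Ny := Finset.univ.filter (fun v => G.Adj y v) with hNy
  have hdx : deg G x = Nx.card := rfl
  have hdy : deg G y = Ny.card := rfl
  have hyN : y ∈ Nx := by simp [hNx, hxy]
  have hxE : x ∉ Nx.erase y := by simp [hNx]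
  have hDN : D ⊆ Ny := by
    intro v hv; simp [hD, hNy] at hv ⊢; exact hv.1
  have hpos : 0 < Nx.card := Finset.card_pos.2 ⟨y, hyN⟩
  have hins : (insert x (Nx.erase y)).card = Nx.card := by
    rw [Finset.card_insert_of_notMem hxE, Finset.card_erase_of_mem hyN]; omega
  have hsub : Ny \ D ⊆ insert x (Nx.erase y) := by
    intro v hv
    simp only [hNy, hD, hNx, Finset.mem_sdiff, Finset.mem_filter, Finset.mem_univ, true_and,
      Finset.mem_insert, Finset.mem_erase] at hv ⊢
    have : v ≠ y := hv.1.ne'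
    tauto
  have hc1 := Finset.card_sdiff_add_card_eq_card hDN
  have hc2 := Finset.card_le_card hsub
  have heq : Ny \ D = insert x (Nx.erase y) := Finset.eq_of_subset_of_card_le hsub (by omega)
  have hD1 : D.card = 1 := by omega
  obtain ⟨z, hz⟩ := Finset.card_eq_one.1 hD1
  have hdd : deg G y = deg G x + 1 := by omega
  have hzD : z ∈ D := by rw [hz]; simp
  obtain ⟨hyz, hzx, hxz⟩ : G.Adj y z ∧ z ≠ x ∧ ¬ G.Adj x z := by simpa [hD] using hzD
  have hdxz : G.dist x z = 2 := dist_two hconn hdiam hzx hxz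
  have hdzx : G.dist z x = 2 := by rw [SimpleGraph.dist_comm]; exact hdxz
  have hdzy : G.dist z y = 1 := SimpleGraph.dist_eq_one_iff_adj.2 hyz.symm
  have hk := key hconn hdiam hBM hxy.symm z (by rw [hdzx, hdzy])
  -- all neighbours of x are adjacent to z
  have hNyE : Ny = insert z (insert x (Nx.erase y)) := by
    rw [← heq, hz, Finset.insert_eq, Finset.union_sdiff_of_subset]
    rw [← hz]; exact hDN
  have hsumy : ∑ v ∈ Ny, (G.dist z v : ℝ) = ∑ v ∈ Nx, (G.dist z v : ℝ) + 1 := by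
    rw [hNyE, Finset.sum_insert, Finset.sum_insert hxE, SimpleGraph.dist_self, hdzx]
    · have := Finset.add_sum_erase Nx (fun v => (G.dist z v : ℝ)) hyN
      simp only [hdzy] at this
      push_cast at this ⊢
      linarith
    · simp [hNx, hzx, hxz]
  have hall : ∀ v, G.Adj x v → G.Adj z v := by
    have hle : ∑ v ∈ Nx, (G.dist z v : ℝ) ≤ Nx.card := by
      unfold avg at hk
      have e1 : (Finset.univ.filter (fun v => G.Adj x v)) = Nx := rfl
      have e2 : (Finset.univ.filter (fun v => G.Adj y v)) = Ny := rfl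
      have hp : (0:ℝ) < Nx.card := by exact_mod_cast hpos
      rw [e1, e2, hsumy, hdd, hdx, div_le_div_iff₀ hp (by positivity)] at hk
      push_cast at hk
      nlinarith
    have hle' : ∑ v ∈ Nx, G.dist z v ≤ ∑ v ∈ Nx, 1 := by
      rw [Finset.sum_const, smul_eq_mul, mul_one]; exact_mod_cast hle
    have hge : ∀ v ∈ Nx, 1 ≤ G.dist z v := by
      intro v hv
      have hv : G.Adj x v := by simpa [hNx] using hv
      refine (hconn.pos_dist_of_ne ?_)
      rintro rfl; exact hxz hv
    intro v hv
    have := (Finset.sum_eq_sum_iff_of_le hge).1 (le_antisymm (Finset.sum_le_sum hge) hle') v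
      (by simp [hNx, hv])
    exact SimpleGraph.dist_eq_one_iff_adj.1 this.symm
  have huniq : ∀ w, w ≠ x → ¬ G.Adj x w → w = z := by
    intro w hwx hxw
    have hd := dist_two hconn hdiam hwx hxw
    obtain ⟨p, hp⟩ := hconn.exists_walk_length_eq_dist x w
    rw [hd] at hp
    obtain ⟨v, hv1, hv2⟩ : ∃ v, G.Adj x v ∧ G.Adj v w := by
      match p, hp with
      | .cons h1 (.cons h2 .nil), _ => exact ⟨_, h1, h2⟩
    have := Finset.card_le_one.1 (out_card hconn hdiam hBM hv1)
    exact this w (by simp [hv2, hwx, hxw]) z (by simp [(hall v hv1).symm, hzx, hxz])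
  have huniq2 : ∀ w, G.dist x w = 2 → w = z := by
    intro w hw
    refine huniq w ?_ ?_
    · rintro rfl; simp at hw
    · intro h; rw [SimpleGraph.dist_eq_one_iff_adj.2 h] at hw; omega
  refine ⟨hdd, ⟨z, hdxz, huniq2⟩, ?_, ?_, ?_⟩
  · intro w hw
    rw [huniq2 w hw]
    unfold deg
    congr 1
    ext v
    simp only [Finset.mem_filter, Finset.mem_univ, true_and]
    refine ⟨fun h => ?_, hall v⟩
    by_contra hc
    have : v ≠ x := by rintro rfl; exact hxz h.symm
    have := huniq v this hc
    exact h.ne this.symm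
  · have : (Finset.univ : Finset V) = insert z (insert x Nx) := by
      ext w
      simp only [Finset.mem_univ, Finset.mem_insert, true_iff]
      by_cases h1 : w = x
      · exact Or.inr (Or.inl h1)
      · by_cases h2 : G.Adj x w
        · exact Or.inr (Or.inr (by simp [hNx, h2]))
        · exact Or.inl (huniq w h1 h2)
    rw [← Finset.card_univ, this, Finset.card_insert_of_notMem, Finset.card_insert_of_notMem, hdx]
    · simp [hNx]
    · simp [hNx, hzx, hxz]
  · intro w hw
    have : w ∈ Ny := by
      rw [hNyE]
      simp only [Finset.mem_insert, Finset.mem_erase]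
      by_cases h1 : w = x
      · exact Or.inr (Or.inl h1)
      · by_cases h2 : G.Adj x w
        · exact Or.inr (Or.inr ⟨hw, by simp [hNx, h2]⟩)
        · exact Or.inl (huniq w h1 h2)
    simpa [hNy] using this
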